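/- There exist constants C > 0 and y₀ < 0 such that for all y ≤ y₀, | A₄(y) − (1/(4√(2π))) (log|y|/|y|) e^{−2y²} − (1/(4√(2π))) (γ/2 + log 2) e^{−2y²}/|y| | ≤ C e^{−2y²}/y², where γ is the Euler–Mascheroni constant; that is, A₄(y) = (1/(4√(2π))) (log|y|/|y|) e^{−2y²} + (1/(4√(2π))) (γ/2 + log 2) e^{−2y²}/|y| + O(y^{−2} e^{−2y²}) as y → −∞. -/

import Mathlib

open MeasureTheory Real Filter

/-- The error function `erf`. -/
noncomputable def erf (x : ℝ) : ℝ := (2 / Real.sqrt Real.pi) * ∫ t in (0 : ℝ)..x, Real.exp (-t ^ 2)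

/-- The complementary error function `erfc`. -/
noncomputable def erfc (x : ℝ) : ℝ := 1 - erf x

noncomputable def A₁ (y : ℝ) : ℝ :=
  -(1 / (2 * Real.sqrt (2 * Real.pi))) *
    ∫ t in Set.Ioi (0 : ℝ), Real.exp (-2 * (t - y) ^ 2) * erfc t

noncomputable def A₂ (y : ℝ) : ℝ :=
  (1 / Real.sqrt (2 * Real.pi)) *
    ∫ t in Set.Ioi (0 : ℝ),
      Real.exp (-2 * (t - y) ^ 2) * t * (Real.exp (-t ^ 2) / Real.sqrt Real.pi - t * erfc t)

noncomputable def A₃ (y : ℝ) : ℝ :=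
  (1 / 4) * (1 + erf (Real.sqrt 2 * y)) *
    (-(y * Real.exp (-2 * y ^ 2)) / Real.sqrt (2 * Real.pi) +
      (1 / 4 + y ^ 2) * (1 - erf (Real.sqrt 2 * y)))

noncomputable def A₄ (y : ℝ) : ℝ :=
  -(1 / Real.sqrt (2 * Real.pi)) *
    ∫ t₁ in Set.Ioi (0 : ℝ), ∫ t₂ in Set.Ioo (0 : ℝ) t₁,
      (1 / (t₁ - t₂)) *
        (Real.exp (-2 * (t₁ - y) ^ 2) * (erf (t₁ - t₂) + erf (Real.sqrt 2 * (t₂ - y))) +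
          Real.exp (-2 * (t₂ - y) ^ 2) * (erf (t₁ - t₂) - erf (Real.sqrt 2 * (t₁ - y))))

noncomputable def A (y : ℝ) : ℝ := A₁ y + A₂ y + A₃ y + A₄ y

lemma gauss_int (x : ℝ) : Integrable (fun v : ℝ => Real.exp (-(x + v) ^ 2)) := by
  have h := integrable_exp_neg_mul_sq (b := 1) one_pos
  have h2 := h.comp_add_left x
  simpa using h2

lemma erf_hasDerivAt (x : ℝ) :
    HasDerivAt erf ((2 / Real.sqrt Real.pi) * Real.exp (-x ^ 2)) x := by
  have hc : Continuous (fun t : ℝ => Real.exp (-t ^ 2)) := by fun_prop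
  exact (hc.integral_hasStrictDerivAt 0 x).hasDerivAt.const_mul _

lemma erf_continuous : Continuous erf :=
  continuous_iff_continuousAt.2 fun x => (erf_hasDerivAt x).continuousAt

lemma erf_zero : erf 0 = 0 := by simp [erf]

lemma gauss_half : ∫ v in Set.Ioi (0 : ℝ), Real.exp (-v ^ 2) = Real.sqrt Real.pi / 2 := by
  have := integral_gaussian_Ioi 1
  simpa using this

lemma erf_tendsto : Tendsto erf atTop (nhds 1) := by
  have h1 : IntegrableOn (fun t : ℝ => Real.exp (-t ^ 2)) (Set.Ioi 0) := by
    have := gauss_int 0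
    simp only [zero_add] at this
    exact this.integrableOn
  have h := intervalIntegral_tendsto_integral_Ioi (0 : ℝ) h1 tendsto_id
  have h2 := h.const_mul (2 / Real.sqrt Real.pi)
  rw [gauss_half] at h2
  have : 2 / Real.sqrt Real.pi * (Real.sqrt Real.pi / 2) = 1 := by
    have : Real.sqrt Real.pi ≠ 0 := by positivity
    field_simp
  rw [this] at h2
  exact h2

lemma erfc_eq (x : ℝ) :
    erfc x = (2 / Real.sqrt Real.pi) * ∫ v in Set.Ioi (0 : ℝ), Real.exp (-(x + v) ^ 2) := by
  rw [← integral_const_mul]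
  have hd : ∀ v ∈ Set.Ici (0:ℝ), HasDerivAt (fun v => erf (x + v))
      ((2 / Real.sqrt Real.pi) * Real.exp (-(x + v) ^ 2)) v := by
    intro v _
    have := (erf_hasDerivAt (x + v)).comp_const_add x v
    exact this
  have ht : Tendsto (fun v => erf (x + v)) atTop (nhds 1) :=
    erf_tendsto.comp (tendsto_atTop_add_const_left _ _ tendsto_id)
  have := integral_Ioi_of_hasDerivAt_of_tendsto' hd
    (((gauss_int x).const_mul _).integrableOn) ht
  rw [this]
  simp [erfc]

lemma k_pos : 0 < 2 / Real.sqrt Real.pi := by positivity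

lemma k_le : 2 / Real.sqrt Real.pi ≤ 2 := by
  rw [div_le_iff₀ (by positivity)]
  have : 1 ≤ Real.sqrt Real.pi := by
    rw [Real.one_le_sqrt]; linarith [Real.pi_gt_three]
  linarith

lemma k_half : (2 / Real.sqrt Real.pi) * (∫ v in Set.Ioi (0 : ℝ), Real.exp (-v ^ 2)) = 1 := by
  rw [gauss_half]
  have : Real.sqrt Real.pi ≠ 0 := by positivity
  field_simp

lemma erfc_nonneg (x : ℝ) : 0 ≤ erfc x := by
  rw [erfc_eq]
  have : 0 ≤ ∫ v in Set.Ioi (0 : ℝ), Real.exp (-(x + v) ^ 2) :=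
    integral_nonneg fun v => (Real.exp_pos _).le
  have := k_pos
  positivity

lemma erfc_le {x : ℝ} (hx : 0 ≤ x) : erfc x ≤ Real.exp (-x ^ 2) := by
  rw [erfc_eq]
  have h : ∫ v in Set.Ioi (0 : ℝ), Real.exp (-(x + v) ^ 2)
      ≤ ∫ v in Set.Ioi (0 : ℝ), Real.exp (-x ^ 2) * Real.exp (-v ^ 2) := by
    apply setIntegral_mono_on (gauss_int x).integrableOn
    · have := (gauss_int 0).const_mul (Real.exp (-x ^ 2))
      simp only [zero_add] at this
      exact this.integrableOn
    · exact measurableSet_Ioi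
    · intro v hv
      rw [← Real.exp_add]
      apply Real.exp_le_exp.2
      have : 0 < v := hv
      nlinarith [mul_nonneg hx this.le]
  rw [integral_const_mul] at h
  calc _ ≤ (2 / Real.sqrt Real.pi) * (Real.exp (-x ^ 2) * ∫ v in Set.Ioi (0 : ℝ), Real.exp (-v ^ 2)) :=
        mul_le_mul_of_nonneg_left h k_pos.le
    _ = Real.exp (-x ^ 2) * ((2 / Real.sqrt Real.pi) * ∫ v in Set.Ioi (0 : ℝ), Real.exp (-v ^ 2)) := by ring
    _ = _ := by rw [k_half, mul_one]

lemma erf_nonneg {x : ℝ} (hx : 0 ≤ x) : 0 ≤ erf x := by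
  unfold erf
  have : 0 ≤ ∫ t in (0 : ℝ)..x, Real.exp (-t ^ 2) :=
    intervalIntegral.integral_nonneg hx fun v _ => (Real.exp_pos _).le
  have := k_pos
  positivity

lemma erf_le {x : ℝ} (hx : 0 ≤ x) : erf x ≤ 2 * x := by
  unfold erf
  have hc : Continuous (fun t : ℝ => Real.exp (-t ^ 2)) := by fun_prop
  have h : ∫ t in (0 : ℝ)..x, Real.exp (-t ^ 2) ≤ ∫ t in (0 : ℝ)..x, (1:ℝ) := by
    apply intervalIntegral.integral_mono_on hx (hc.intervalIntegrable _ _) (by simp)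
    intro t _
    apply Real.exp_le_one_iff.2
    nlinarith [sq_nonneg t]
  simp only [intervalIntegral.integral_const, sub_zero, smul_eq_mul, mul_one] at h
  exact mul_le_mul k_le h (intervalIntegral.integral_nonneg hx fun v _ => (Real.exp_pos _).le)
    (by norm_num)

/-- Bound on the exponentially small cross term. -/
lemma cross_bound {u s : ℝ} (hu : 1 ≤ u) (hs : 0 < s) :
    |Real.exp (-2 * (u + s) ^ 2) * erfc (Real.sqrt 2 * u)
      - Real.exp (-2 * u ^ 2) * erfc (Real.sqrt 2 * (u + s))|
      ≤ s * (Real.exp (-2 * u ^ 2) * Real.exp (-2 * (u + s) ^ 2)) := by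
  set r := Real.sqrt 2 with hr
  have hr2 : r ^ 2 = 2 := Real.sq_sqrt (by norm_num)
  have hr0 : 0 < r := by positivity
  rw [erfc_eq, erfc_eq]
  have e : Real.exp (-2 * (u + s) ^ 2) * ((2 / Real.sqrt Real.pi) * ∫ v in Set.Ioi (0 : ℝ), Real.exp (-(r * u + v) ^ 2))
      - Real.exp (-2 * u ^ 2) * ((2 / Real.sqrt Real.pi) * ∫ v in Set.Ioi (0 : ℝ), Real.exp (-(r * (u + s) + v) ^ 2))
      = (2 / Real.sqrt Real.pi) * ∫ v in Set.Ioi (0 : ℝ), (Real.exp (-2 * (u + s) ^ 2) * Real.exp (-(r * u + v) ^ 2)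
        - Real.exp (-2 * u ^ 2) * Real.exp (-(r * (u + s) + v) ^ 2)) := by
    rw [integral_sub (((gauss_int _).const_mul _).integrableOn) (((gauss_int _).const_mul _).integrableOn),
      integral_const_mul, integral_const_mul]
    ring
  rw [e, abs_mul, abs_of_pos k_pos]
  have hb : ‖∫ v in Set.Ioi (0 : ℝ), (Real.exp (-2 * (u + s) ^ 2) * Real.exp (-(r * u + v) ^ 2)
        - Real.exp (-2 * u ^ 2) * Real.exp (-(r * (u + s) + v) ^ 2))‖
      ≤ ∫ v in Set.Ioi (0 : ℝ), s * (Real.exp (-2 * u ^ 2) * Real.exp (-2 * (u + s) ^ 2)) * Real.exp (-v ^ 2) := by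
    apply norm_integral_le_of_norm_le
    · have := (gauss_int 0).const_mul (s * (Real.exp (-2 * u ^ 2) * Real.exp (-2 * (u + s) ^ 2)))
      simp only [zero_add] at this
      exact this.integrableOn
    · filter_upwards [ae_restrict_mem measurableSet_Ioi] with v hv
      have hv : 0 < v := hv
      have e1 : Real.exp (-2 * (u + s) ^ 2) * Real.exp (-(r * u + v) ^ 2)
          = (Real.exp (-2 * u ^ 2) * Real.exp (-2 * (u + s) ^ 2)) * Real.exp (-v ^ 2) * Real.exp (-(2 * r * u * v)) := by
        simp only [← Real.exp_add]; congr 1; linear_combination (-u^2) * hr2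
      have e2 : Real.exp (-2 * u ^ 2) * Real.exp (-(r * (u + s) + v) ^ 2)
          = (Real.exp (-2 * u ^ 2) * Real.exp (-2 * (u + s) ^ 2)) * Real.exp (-v ^ 2) * Real.exp (-(2 * r * u * v))
            * Real.exp (-(2 * r * s * v)) := by
        simp only [← Real.exp_add]; congr 1; linear_combination (-(u+s)^2) * hr2
      rw [e1, e2]
      set Q := (Real.exp (-2 * u ^ 2) * Real.exp (-2 * (u + s) ^ 2)) * Real.exp (-v ^ 2) with hQ
      have hQ0 : 0 ≤ Q := by positivity
      have hw1 : 1 - Real.exp (-(2 * r * s * v)) ≤ 2 * r * s * v := by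
        linarith [Real.add_one_le_exp (-(2 * r * s * v))]
      have hw0 : 0 ≤ 1 - Real.exp (-(2 * r * s * v)) := by
        have : Real.exp (-(2 * r * s * v)) ≤ 1 := Real.exp_le_one_iff.2 (by
          have : 0 ≤ 2 * r * s * v := by positivity
          linarith)
        linarith
      have hx : 2 * r * v * Real.exp (-(2 * r * u * v)) ≤ 1 := by
        rw [Real.exp_neg, ← div_eq_mul_inv, div_le_one (Real.exp_pos _)]
        have := Real.add_one_le_exp (2 * r * u * v)
        have h3 : 2 * r * v * 1 ≤ 2 * r * v * u := by gcongr
        nlinarith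
      have : Q * Real.exp (-(2 * r * u * v)) - Q * Real.exp (-(2 * r * u * v)) * Real.exp (-(2 * r * s * v))
          = Q * (Real.exp (-(2 * r * u * v)) * (1 - Real.exp (-(2 * r * s * v)))) := by ring
      rw [this, Real.norm_of_nonneg (by positivity)]
      calc _ ≤ Q * (Real.exp (-(2 * r * u * v)) * (2 * r * s * v)) := by gcongr
        _ = Q * s * (2 * r * v * Real.exp (-(2 * r * u * v))) := by ring
        _ ≤ Q * s * 1 := by gcongr
        _ = _ := by rw [hQ]; ring
  rw [integral_const_mul] at hb
  rw [Real.norm_eq_abs] at hb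
  calc _ ≤ _ := mul_le_mul_of_nonneg_left hb k_pos.le
    _ = s * (Real.exp (-2 * u ^ 2) * Real.exp (-2 * (u + s) ^ 2)) * ((2 / Real.sqrt Real.pi) * (∫ v in Set.Ioi (0 : ℝ), Real.exp (-v ^ 2))) := by ring
    _ = _ := by rw [k_half, mul_one]

noncomputable def FF (s u : ℝ) : ℝ :=
  (1 / s) * (Real.exp (-2 * (u + s) ^ 2) * (erf s + erf (Real.sqrt 2 * u)) +
          Real.exp (-2 * u ^ 2) * (erf s - erf (Real.sqrt 2 * (u + s))))

lemma FF_approx {u s : ℝ} (hu : 1 ≤ u) (hs : 0 < s) :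
    |FF s u + Real.exp (-2 * u ^ 2) * ((erfc s - Real.exp (-(4 * u * s))) / s)|
      ≤ 7 * Real.exp (-2 * u ^ 2) * Real.exp (-(2 * u * s)) := by
  have hcb := cross_bound hu hs
  have he1 : Real.exp (-2 * (u + s) ^ 2) = Real.exp (-2 * u ^ 2) * Real.exp (-(4 * u * s)) * Real.exp (-2 * s ^ 2) := by
    simp only [← Real.exp_add]; congr 1; ring
  set X := Real.exp (-2 * (u + s) ^ 2) * erfc (Real.sqrt 2 * u)
      - Real.exp (-2 * u ^ 2) * erfc (Real.sqrt 2 * (u + s)) with hX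
  set e2 := Real.exp (-2 * u ^ 2)
  set e1 := Real.exp (-2 * (u + s) ^ 2)
  set w := Real.exp (-(4 * u * s)) with hw
  set g := Real.exp (-2 * s ^ 2)
  have he2 : 0 < e2 := Real.exp_pos _
  have he2' : e2 ≤ 1 := Real.exp_le_one_iff.2 (by nlinarith)
  have hw0 : 0 < w := Real.exp_pos _
  have hg0 : 0 < g := Real.exp_pos _
  have hg1 : g ≤ 1 := Real.exp_le_one_iff.2 (by nlinarith)
  have hg2 : 1 - g ≤ 2 * s ^ 2 := by linarith [Real.add_one_le_exp (-2 * s ^ 2)]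
  have hc0 := erfc_nonneg s
  have hf0 := erf_nonneg hs.le
  have hf1 := erf_le hs.le
  have hc1 : erfc s = 1 - erf s := rfl
  have key : FF s u + e2 * ((erfc s - w) / s)
      = (1 / s) * (e2 * w * (-(1 - erfc s * g) + 2 * g * erf s) - X) := by
    have h1 : erf (Real.sqrt 2 * u) = 1 - erfc (Real.sqrt 2 * u) := by unfold erfc; ring
    have h2 : erf (Real.sqrt 2 * (u + s)) = 1 - erfc (Real.sqrt 2 * (u + s)) := by unfold erfc; ring
    have : FF s u = (1 / s) * (e1 * (erf s + (1 - erfc (Real.sqrt 2 * u))) +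
          e2 * (erf s - (1 - erfc (Real.sqrt 2 * (u + s))))) := by
      rw [← h1, ← h2]; rfl
    rw [this, hX, he1, hc1]
    field_simp
    ring
  rw [key, abs_mul, abs_of_pos (by positivity : 0 < 1 / s), one_div, inv_mul_le_iff₀ hs]
  have hws : w * (1 + s) ≤ Real.exp (-(2 * u * s)) := by
    calc w * (1 + s) ≤ w * Real.exp s := by gcongr; linarith [Real.add_one_le_exp s]
      _ = Real.exp (-(4 * u * s) + s) := by rw [hw, Real.exp_add]
      _ ≤ _ := by apply Real.exp_le_exp.2; nlinarith
  have hA : |(-(1 - erfc s * g) + 2 * g * erf s)| ≤ 6 * s * (1 + s) := by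
    have ha : 0 ≤ 1 - erfc s * g := by nlinarith
    have hb : 1 - erfc s * g ≤ 2 * s + 2 * s ^ 2 := by nlinarith
    have hc : 0 ≤ g * erf s := by positivity
    have hd : g * erf s ≤ 2 * s := by nlinarith
    rw [abs_le]; constructor <;> nlinarith
  have hXb : |X| ≤ s * (e2 * w) := by
    refine hcb.trans ?_
    have : e1 ≤ w := by
      rw [he1]
      calc e2 * w * g ≤ 1 * w * 1 := by gcongr
        _ = w := by ring
    gcongr
  calc |e2 * w * (-(1 - erfc s * g) + 2 * g * erf s) - X|
      ≤ |e2 * w * (-(1 - erfc s * g) + 2 * g * erf s)| + |X| := abs_sub _ _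
    _ ≤ e2 * w * (6 * s * (1 + s)) + s * (e2 * w) := by
        rw [abs_mul, abs_of_pos (by positivity : 0 < e2 * w)]
        gcongr
    _ ≤ 7 * s * e2 * (w * (1 + s)) := by
        have : 0 ≤ e2 * w * s * s := by positivity
        nlinarith
    _ ≤ 7 * s * e2 * Real.exp (-(2 * u * s)) := by gcongr
    _ = _ := by ring

lemma hh_bound {l x s : ℝ} (hl : 1 ≤ l) (hx : 0 ≤ x) (hx1 : x ≤ 1) (hs : 0 < s) :
    |s ^ (x - 1) * (erfc s - Real.exp (-(l * s)))| ≤ (2 + l) * Real.exp 1 * Real.exp (-s) := by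
  have hc0 := erfc_nonneg s
  have hcl := erfc_le hs.le
  have hf0 := erf_nonneg hs.le
  have hf1 := erf_le hs.le
  have hc1 : erfc s = 1 - erf s := rfl
  have hp : 0 < s ^ (x - 1) := Real.rpow_pos_of_pos hs _
  have hw0 := Real.exp_pos (-(l * s))
  have hw1 : Real.exp (-(l * s)) ≤ 1 := Real.exp_le_one_iff.2 (by nlinarith)
  rw [abs_mul, abs_of_pos hp]
  rcases le_total s 1 with h | h
  · have h1 : s ^ (x - 1) ≤ s ^ (-1 : ℝ) :=
      Real.rpow_le_rpow_of_exponent_ge hs h (by linarith)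
    rw [Real.rpow_neg_one] at h1
    have h2 : |erfc s - Real.exp (-(l * s))| ≤ (2 + l) * s := by
      have := Real.add_one_le_exp (-(l * s))
      rw [abs_le]; constructor <;> nlinarith
    have h3 : 1 ≤ Real.exp 1 * Real.exp (-s) := by
      rw [← Real.exp_add]; exact Real.one_le_exp (by linarith)
    calc _ ≤ s⁻¹ * ((2 + l) * s) := by gcongr
      _ = (2 + l) * 1 := by field_simp
      _ ≤ (2 + l) * (Real.exp 1 * Real.exp (-s)) := by gcongr
      _ = _ := by ring
  · have h1 : s ^ (x - 1) ≤ 1 := Real.rpow_le_one_of_one_le_of_nonpos h (by linarith)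
    have h4 : Real.exp (-s ^ 2) ≤ Real.exp (-s) := Real.exp_le_exp.2 (by nlinarith)
    have h5 : Real.exp (-(l * s)) ≤ Real.exp (-s) := Real.exp_le_exp.2 (by nlinarith)
    have h2 : |erfc s - Real.exp (-(l * s))| ≤ Real.exp (-s) := by
      rw [abs_le]; constructor <;> nlinarith
    have h3 : 1 ≤ Real.exp 1 := Real.one_le_exp (by norm_num)
    have h6 := Real.exp_pos (-s)
    calc _ ≤ 1 * Real.exp (-s) := by gcongr
      _ ≤ ((2 + l) * Real.exp 1) * Real.exp (-s) := by
          gcongr; nlinarith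

lemma erfc_measurable : Measurable erfc := by
  have : Continuous erfc := continuous_const.sub erf_continuous
  exact this.measurable

lemma exp_neg_int : IntegrableOn (fun s : ℝ => Real.exp (-s)) (Set.Ioi 0) := by
  have := exp_neg_integrableOn_Ioi 0 (one_pos)
  simpa using this

lemma mellin_erfc_int {x : ℝ} (hx : 0 < x) :
    IntegrableOn (fun s : ℝ => s ^ (x - 1) * erfc s) (Set.Ioi 0) := by
  have h := integrableOn_rpow_mul_exp_neg_mul_sq (b := 1) one_pos (s := x - 1) (by linarith)
  refine Integrable.mono' h ?_ ?_
  · have : Measurable (fun s : ℝ => s ^ (x - 1) * erfc s) :=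
      (by fun_prop : Measurable fun s : ℝ => s ^ (x - 1)).mul erfc_measurable
    exact this.aestronglyMeasurable
  · filter_upwards [ae_restrict_mem measurableSet_Ioi] with s hs
    have hs : 0 < s := hs
    have hp : 0 < s ^ (x - 1) := Real.rpow_pos_of_pos hs _
    have hc0 := erfc_nonneg s
    rw [Real.norm_of_nonneg (by positivity)]
    have := erfc_le hs.le
    gcongr
    simpa using this

lemma mellin_erfc {x : ℝ} (hx : 0 < x) :
    ∫ s in Set.Ioi (0 : ℝ), s ^ (x - 1) * erfc s
      = Real.Gamma ((x + 1) / 2) / Real.sqrt Real.pi / x := by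
  have hu : ∀ s ∈ Set.Ioi (0:ℝ), HasDerivAt erfc (-((2 / Real.sqrt Real.pi) * Real.exp (-s ^ 2))) s := by
    intro s _
    exact (erf_hasDerivAt s).const_sub 1
  have hv : ∀ s ∈ Set.Ioi (0:ℝ), HasDerivAt (fun s : ℝ => s ^ x / x) (s ^ (x - 1)) s := by
    intro s hs
    have hs : 0 < s := hs
    have := (Real.hasDerivAt_rpow_const (p := x) (Or.inl hs.ne')).div_const x
    convert! this using 1
    field_simp
  have hint1 : IntegrableOn (erfc * fun s : ℝ => s ^ (x - 1)) (Set.Ioi 0) := by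
    have := mellin_erfc_int hx
    refine this.congr_fun (fun s _ => ?_) measurableSet_Ioi
    simp [mul_comm]
  have hg := integrableOn_rpow_mul_exp_neg_mul_sq (b := 1) one_pos (s := x) (by linarith)
  have hint2 : IntegrableOn ((fun s : ℝ => -((2 / Real.sqrt Real.pi) * Real.exp (-s ^ 2))) * fun s : ℝ => s ^ x / x) (Set.Ioi 0) := by
    have := hg.const_mul (-(2 / Real.sqrt Real.pi) / x)
    refine IntegrableOn.congr_fun this (fun s _ => ?_) measurableSet_Ioi
    simp only [Pi.mul_apply, neg_mul, one_mul]
    ring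
  have h0 : Tendsto (erfc * fun s : ℝ => s ^ x / x) (nhdsWithin 0 (Set.Ioi 0)) (nhds 0) := by
    have hc : Continuous (erfc * fun s : ℝ => s ^ x / x) := by
      have h1 : Continuous erfc := continuous_const.sub erf_continuous
      have h2 : Continuous (fun s : ℝ => s ^ x / x) :=
        (Real.continuous_rpow_const hx.le).div_const x
      exact h1.mul h2
    have := (hc.tendsto 0).mono_left (nhdsWithin_le_nhds (s := Set.Ioi 0))
    simpa [Real.zero_rpow hx.ne'] using this
  have hi : Tendsto (erfc * fun s : ℝ => s ^ x / x) atTop (nhds 0) := by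
    have ht := (tendsto_rpow_mul_exp_neg_mul_atTop_nhds_zero x 1 one_pos).div_const x
    rw [zero_div] at ht
    refine tendsto_of_tendsto_of_tendsto_of_le_of_le' tendsto_const_nhds ht ?_ ?_
    · filter_upwards [eventually_ge_atTop 1] with s hs
      have hs : 0 < s := by linarith
      have := erfc_nonneg s
      simp only [Pi.mul_apply]
      positivity
    · filter_upwards [eventually_ge_atTop 1] with s hs
      have hs0 : 0 < s := by linarith
      have h1 := erfc_le hs0.le
      have h4 : Real.exp (-s ^ 2) ≤ Real.exp (-1 * s) := Real.exp_le_exp.2 (by nlinarith)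
      simp only [Pi.mul_apply]
      calc erfc s * (s ^ x / x) ≤ Real.exp (-1 * s) * (s ^ x / x) := by gcongr; exact h1.trans h4
        _ = _ := by ring
  have key := integral_Ioi_mul_deriv_eq_deriv_mul hu hv hint1 hint2 h0 hi
  have e1 : ∫ s in Set.Ioi (0 : ℝ), s ^ (x - 1) * erfc s
      = ∫ s in Set.Ioi (0 : ℝ), erfc s * s ^ (x - 1) := by simp_rw [mul_comm]
  have e2 : ∫ s in Set.Ioi (0 : ℝ), -((2 / Real.sqrt Real.pi) * Real.exp (-s ^ 2)) * (s ^ x / x)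
      = (-(2 / Real.sqrt Real.pi) / x) * ∫ s in Set.Ioi (0 : ℝ), s ^ x * Real.exp (-s ^ (2:ℝ)) := by
    rw [← integral_const_mul]
    refine setIntegral_congr_fun measurableSet_Ioi fun s _ => ?_
    simp only [Real.rpow_two]
    ring
  rw [e1, key, e2, integral_rpow_mul_exp_neg_rpow (by norm_num) (by linarith)]
  ring

lemma NN_tendsto {l : ℝ} (hl : 0 < l) :
    Tendsto (fun x : ℝ => Real.Gamma ((x + 1) / 2) / Real.sqrt Real.pi / x
        - (1 / l) ^ x * Real.Gamma x) (nhdsWithin 0 (Set.Ioi 0))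
      (nhds (Real.log l + Real.eulerMascheroniConstant / 2 - Real.log 2)) := by
  have hpi : Real.sqrt Real.pi ≠ 0 := by positivity
  have h1 : HasDerivAt (fun x : ℝ => Real.Gamma ((x + 1) / 2) / Real.sqrt Real.pi)
      ((-Real.sqrt Real.pi * (Real.eulerMascheroniConstant + 2 * Real.log 2)) * (1 / 2) / Real.sqrt Real.pi) 0 := by
    have hin : HasDerivAt (fun x : ℝ => (x + 1) / 2) (1 / 2) 0 :=
      ((hasDerivAt_id (0:ℝ)).add_const 1).div_const 2
    have hG : HasDerivAt Real.Gamma (-Real.sqrt Real.pi * (Real.eulerMascheroniConstant + 2 * Real.log 2))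
        ((0 + 1) / 2) := by
      have := Real.hasDerivAt_Gamma_one_half
      norm_num at this ⊢
      exact this
    exact (HasDerivAt.comp (0:ℝ) hG hin).div_const _
  have h2 : HasDerivAt (fun x : ℝ => (1 / l) ^ x * Real.Gamma (x + 1))
      (Real.log (1 / l) * Real.Gamma (0 + 1) + (-Real.eulerMascheroniConstant)) 0 := by
    have ha : HasDerivAt (fun x : ℝ => (1 / l) ^ x) ((1 / l) ^ (0:ℝ) * Real.log (1 / l)) 0 :=
      (Real.hasStrictDerivAt_const_rpow (by positivity) 0).hasDerivAt
    have hb : HasDerivAt (fun x : ℝ => Real.Gamma (x + 1)) (-Real.eulerMascheroniConstant) 0 := by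
      have : HasDerivAt Real.Gamma (-Real.eulerMascheroniConstant) (0 + 1) := by
        rw [zero_add]; exact Real.hasDerivAt_Gamma_one
      exact this.comp_add_const 0 1
    convert! ha.mul hb using 1
    simp
  have h3 := (h1.sub h2).tendsto_slope_zero_right
  have e : ((-Real.sqrt Real.pi * (Real.eulerMascheroniConstant + 2 * Real.log 2)) * (1 / 2) / Real.sqrt Real.pi)
      - (Real.log (1 / l) * Real.Gamma (0 + 1) + (-Real.eulerMascheroniConstant))
      = Real.log l + Real.eulerMascheroniConstant / 2 - Real.log 2 := by
    rw [one_div l, Real.log_inv, zero_add, Real.Gamma_one]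
    field_simp
    ring
  rw [e] at h3
  refine h3.congr' ?_
  filter_upwards [self_mem_nhdsWithin] with x hx
  have hx : 0 < x := hx
  have hg : Real.Gamma ((0 + 1) / 2) = Real.sqrt Real.pi := by
    rw [← Real.Gamma_one_half_eq]; norm_num
  simp only [Pi.sub_apply, smul_eq_mul, zero_add, Real.rpow_zero, Real.Gamma_one] at hg ⊢
  rw [hg, Real.Gamma_add_one hx.ne']
  field_simp
  ring

lemma NN_int {l : ℝ} (hl : 1 ≤ l) :
    IntegrableOn (fun s => (erfc s - Real.exp (-(l * s))) / s) (Set.Ioi 0) := by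
  refine Integrable.mono' (exp_neg_int.const_mul ((2 + l) * Real.exp 1)) ?_ ?_
  · have : Measurable (fun s : ℝ => (erfc s - Real.exp (-(l * s))) / s) :=
      (erfc_measurable.sub (by fun_prop)).div measurable_id
    exact this.aestronglyMeasurable
  · filter_upwards [ae_restrict_mem measurableSet_Ioi] with s hs
    have := hh_bound hl le_rfl zero_le_one (show 0 < s from hs)
    rw [zero_sub, Real.rpow_neg_one, inv_mul_eq_div] at this
    exact this

lemma NN_eq {l : ℝ} (hl : 1 ≤ l) :
    ∫ s in Set.Ioi (0 : ℝ), (erfc s - Real.exp (-(l * s))) / s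
      = Real.log l + Real.eulerMascheroniConstant / 2 - Real.log 2 := by
  have hl0 : 0 < l := by linarith
  have hA : Tendsto (fun x : ℝ => ∫ s in Set.Ioi (0 : ℝ), s ^ (x - 1) * (erfc s - Real.exp (-(l * s))))
      (nhdsWithin 0 (Set.Ioi 0))
      (nhds (∫ s in Set.Ioi (0 : ℝ), (erfc s - Real.exp (-(l * s))) / s)) := by
    apply tendsto_integral_filter_of_dominated_convergence
      (fun s => (2 + l) * Real.exp 1 * Real.exp (-s))
    · refine Eventually.of_forall fun x => ?_
      have : Measurable (fun s : ℝ => s ^ (x - 1) * (erfc s - Real.exp (-(l * s)))) :=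
        (by fun_prop : Measurable fun s : ℝ => s ^ (x - 1)).mul (erfc_measurable.sub (by fun_prop))
      exact this.aestronglyMeasurable
    · have h1 : ∀ᶠ x : ℝ in nhdsWithin 0 (Set.Ioi 0), x ∈ Set.Ioo (0:ℝ) 1 :=
        Ioo_mem_nhdsGT one_pos
      filter_upwards [h1] with x hx
      filter_upwards [ae_restrict_mem measurableSet_Ioi] with s hs
      exact hh_bound hl hx.1.le hx.2.le hs
    · exact exp_neg_int.const_mul ((2 + l) * Real.exp 1)
    · filter_upwards [ae_restrict_mem measurableSet_Ioi] with s hs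
      have hs : 0 < s := hs
      have hc : Tendsto (fun x : ℝ => s ^ (x - 1)) (nhds 0) (nhds (s ^ ((0:ℝ) - 1))) := by
        have : Continuous (fun x : ℝ => s ^ (x - 1)) :=
          (Real.continuous_const_rpow hs.ne').comp (by fun_prop)
        exact this.tendsto 0
      have := (hc.mono_left (nhdsWithin_le_nhds (s := Set.Ioi 0))).mul_const (erfc s - Real.exp (-(l * s)))
      rw [zero_sub, Real.rpow_neg_one, inv_mul_eq_div] at this
      exact this
  refine tendsto_nhds_unique hA ((NN_tendsto hl0).congr' ?_)
  filter_upwards [self_mem_nhdsWithin] with x hx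
  have hx : 0 < x := hx
  have hi2 : IntegrableOn (fun s : ℝ => s ^ (x - 1) * Real.exp (-(l * s))) (Set.Ioi 0) := by
    by_contra hcon
    have h1 := Real.integral_rpow_mul_exp_neg_mul_Ioi hx hl0
    rw [integral_undef hcon] at h1
    have : 0 < (1 / l) ^ x * Real.Gamma x := by
      have := Real.Gamma_pos_of_pos hx
      positivity
    linarith
  rw [← mellin_erfc hx, ← Real.integral_rpow_mul_exp_neg_mul_Ioi hx hl0,
    ← integral_sub (mellin_erfc_int hx) hi2]
  simp_rw [mul_sub]

lemma FF_measurable : Measurable (fun p : ℝ × ℝ => FF p.1 p.2) := by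
  have he : Measurable erf := erf_continuous.measurable
  unfold FF
  fun_prop

lemma FF_bound {u s : ℝ} (hu : 1 ≤ u) (hs : 0 < s) :
    |FF s u| ≤ 19 * (Real.exp (-s) * Real.exp (-u)) := by
  have h1 := FF_approx hu hs
  have h2 := hh_bound (l := 4 * u) (by linarith) le_rfl zero_le_one hs
  rw [zero_sub, Real.rpow_neg_one, inv_mul_eq_div] at h2
  set H := (erfc s - Real.exp (-(4 * u * s))) / s
  set e2 := Real.exp (-2 * u ^ 2)
  have he2 : 0 < e2 := Real.exp_pos _
  have he2' : e2 ≤ Real.exp (-u) * Real.exp (-u) := by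
    rw [← Real.exp_add]; exact Real.exp_le_exp.2 (by nlinarith)
  have h3 : Real.exp (-(2 * u * s)) ≤ Real.exp (-s) := Real.exp_le_exp.2 (by nlinarith)
  have h4 : Real.exp (-u) ≤ 1 := Real.exp_le_one_iff.2 (by linarith)
  have h5 : (2 + 4 * u) * Real.exp (-u) ≤ 4 := by
    rw [Real.exp_neg, ← div_eq_mul_inv, div_le_iff₀ (Real.exp_pos _)]
    linarith [Real.add_one_le_exp u]
  have h6 : Real.exp 1 ≤ 3 := by linarith [Real.exp_one_lt_d9]
  have hu0 := Real.exp_pos (-u)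
  have hs0 := Real.exp_pos (-s)
  have : FF s u = (FF s u + e2 * H) - e2 * H := by ring
  rw [this]
  calc |(FF s u + e2 * H) - e2 * H| ≤ |FF s u + e2 * H| + |e2 * H| := abs_sub _ _
    _ ≤ 7 * e2 * Real.exp (-(2 * u * s)) + e2 * ((2 + 4 * u) * Real.exp 1 * Real.exp (-s)) := by
        rw [abs_mul e2, abs_of_pos he2]; gcongr
    _ ≤ 7 * (Real.exp (-u) * Real.exp (-u)) * Real.exp (-s)
        + (Real.exp (-u) * Real.exp (-u)) * ((2 + 4 * u) * 3 * Real.exp (-s)) := by gcongr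
    _ = 7 * (Real.exp (-u) * Real.exp (-u)) * Real.exp (-s)
        + 3 * Real.exp (-u) * Real.exp (-s) * ((2 + 4 * u) * Real.exp (-u)) := by ring
    _ ≤ 7 * (Real.exp (-u) * 1) * Real.exp (-s) + 3 * Real.exp (-u) * Real.exp (-s) * 4 := by gcongr
    _ = _ := by ring

lemma FF_int {u : ℝ} (hu : 1 ≤ u) : IntegrableOn (fun s => FF s u) (Set.Ioi 0) := by
  refine Integrable.mono' (exp_neg_int.const_mul (19 * Real.exp (-u))) ?_ ?_
  · exact (FF_measurable.comp (measurable_id.prodMk measurable_const)).aestronglyMeasurable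
  · filter_upwards [ae_restrict_mem measurableSet_Ioi] with s hs
    have := FF_bound hu (show 0 < s from hs)
    rw [Real.norm_eq_abs]
    linarith

lemma exp_int {a : ℝ} (ha : 0 < a) : ∫ s in Set.Ioi (0:ℝ), Real.exp (-(a * s)) = 1 / a := by
  have := integral_exp_mul_Ioi (a := -a) (by linarith) 0
  simp only [neg_mul, mul_zero, Real.exp_zero] at this
  rw [neg_div_neg_eq] at this
  exact this

lemma exp_intble {a : ℝ} (ha : 0 < a) :
    IntegrableOn (fun s : ℝ => Real.exp (-(a * s))) (Set.Ioi 0) := by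
  simpa using exp_neg_integrableOn_Ioi 0 ha

lemma JJ_approx {u : ℝ} (hu : 1 ≤ u) :
    |(∫ s in Set.Ioi (0:ℝ), FF s u) + Real.exp (-2 * u ^ 2) *
      (Real.log u + (Real.eulerMascheroniConstant / 2 + Real.log 2))|
      ≤ 7 * Real.exp (-2 * u ^ 2) * (1 / (2 * u)) := by
  have hl : (1:ℝ) ≤ 4 * u := by linarith
  have h1 := NN_eq hl
  have hlog : Real.log (4 * u) = 2 * Real.log 2 + Real.log u := by
    rw [Real.log_mul (by norm_num) (by linarith), show (4:ℝ) = 2 ^ 2 by norm_num, Real.log_pow]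
    norm_num
  have h2 : Real.log u + (Real.eulerMascheroniConstant / 2 + Real.log 2)
      = ∫ s in Set.Ioi (0 : ℝ), (erfc s - Real.exp (-(4 * u * s))) / s := by
    rw [h1, hlog]; ring
  rw [h2, ← integral_const_mul, ← integral_add (FF_int hu) ((NN_int hl).const_mul _),
    ← exp_int (by linarith : 0 < 2 * u), ← integral_const_mul, ← Real.norm_eq_abs]
  apply norm_integral_le_of_norm_le ((exp_intble (by linarith)).const_mul _)
  filter_upwards [ae_restrict_mem measurableSet_Ioi] with s hs
  exact FF_approx hu hs

lemma swap_prod_int {Y : ℝ} (hY : 1 ≤ Y) :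
    Integrable ((Set.Ioi (0:ℝ) ×ˢ Set.Ioi (0:ℝ)).indicator
      (fun p : ℝ × ℝ => FF p.1 (Y + p.2))) ((volume : Measure ℝ).prod volume) := by
  rw [integrable_indicator_iff (measurableSet_Ioi.prod measurableSet_Ioi), IntegrableOn,
    ← Measure.prod_restrict]
  have hd : Integrable (fun p : ℝ × ℝ => Real.exp (-p.1) * Real.exp (-p.2))
      ((volume.restrict (Set.Ioi (0:ℝ))).prod (volume.restrict (Set.Ioi (0:ℝ)))) :=
    Integrable.mul_prod exp_neg_int exp_neg_int
  refine Integrable.mono' (hd.const_mul 19) ?_ ?_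
  · exact (FF_measurable.comp (f := fun p : ℝ × ℝ => (p.1, Y + p.2))
      (by fun_prop)).aestronglyMeasurable
  · rw [Measure.prod_restrict]
    filter_upwards [ae_restrict_mem (measurableSet_Ioi.prod measurableSet_Ioi)] with p hp
    have hp1 : 0 < p.1 := hp.1
    have hp2 : 0 < p.2 := hp.2
    refine (FF_bound (by linarith) hp1).trans ?_
    have : Real.exp (-(Y + p.2)) ≤ Real.exp (-p.2) := Real.exp_le_exp.2 (by linarith)
    gcongr

lemma A4_swap {Y : ℝ} (hY : 1 ≤ Y) :
    (∫ t₁ in Set.Ioi (0 : ℝ), ∫ t₂ in Set.Ioo (0 : ℝ) t₁, FF (t₁ - t₂) (Y + t₂))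
      = ∫ t in Set.Ioi (0 : ℝ), ∫ s in Set.Ioi (0 : ℝ), FF s (Y + t) := by
  set g := (Set.Ioi (0:ℝ) ×ˢ Set.Ioi (0:ℝ)).indicator
      (fun p : ℝ × ℝ => FF p.1 (Y + p.2)) with hg
  have hgi := swap_prod_int hY
  have hmp := measurePreserving_sub_prod (volume : Measure ℝ) (volume : Measure ℝ)
  have hgi2 : Integrable (Function.uncurry fun t₁ t₂ : ℝ => g (t₁ - t₂, t₂))
      ((volume : Measure ℝ).prod volume) :=
    hmp.integrable_comp_of_integrable hgi
  have hL : (∫ t₁ in Set.Ioi (0 : ℝ), ∫ t₂ in Set.Ioo (0 : ℝ) t₁, FF (t₁ - t₂) (Y + t₂))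
      = ∫ t₁, ∫ t₂, g (t₁ - t₂, t₂) := by
    rw [← integral_indicator measurableSet_Ioi]
    congr 1; ext t₁
    have h0 : ∀ t₁, ∫ t₂ in Set.Ioo (0 : ℝ) t₁, FF (t₁ - t₂) (Y + t₂) = ∫ t₂, g (t₁ - t₂, t₂) := by
      intro t₁
      rw [← integral_indicator measurableSet_Ioo]
      congr 1; ext t₂
      simp only [hg, Set.indicator_apply, Set.mem_prod, Set.mem_Ioi, Set.mem_Ioo, sub_pos]
      simp only [and_comm]
    rw [Set.indicator_apply]
    split_ifs with h
    · exact h0 t₁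
    · rw [← h0, Set.Ioo_eq_empty (by simpa using h)]; simp
  rw [hL, integral_integral_swap hgi2, ← integral_indicator measurableSet_Ioi]
  congr 1; ext t
  rw [integral_sub_right_eq_self (fun x => g (x, t)) t]
  rw [Set.indicator_apply]
  split_ifs with h
  · rw [← integral_indicator measurableSet_Ioi]
    congr 1; ext s
    have h : 0 < t := h
    simp [hg, Set.indicator_apply, h]
  · have : ∀ s, g (s, t) = 0 := by
      intro s
      simp only [hg, Set.indicator_apply, Set.mem_prod, h, and_false, if_false]
    simp [this]

lemma c_bounds : 0 ≤ Real.eulerMascheroniConstant / 2 + Real.log 2 ∧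
    Real.eulerMascheroniConstant / 2 + Real.log 2 ≤ 2 := by
  have h1 := Real.one_half_lt_eulerMascheroniConstant
  have h2 := Real.eulerMascheroniConstant_lt_two_thirds
  have h3 := Real.log_two_gt_d9
  have h4 := Real.log_two_lt_d9
  constructor <;> linarith

lemma JJ_point {Y t : ℝ} (hY : 1 ≤ Y) (ht : 0 < t) :
    |(∫ s in Set.Ioi (0:ℝ), FF s (Y + t)) +
      Real.exp (-2 * Y ^ 2) * (Real.log Y + (Real.eulerMascheroniConstant / 2 + Real.log 2)) *
        Real.exp (-(4 * Y * t))|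
      ≤ Real.exp (-2 * Y ^ 2) * (17 / Y) * Real.exp (-(3 * Y * t)) := by
  have hJ := JJ_approx (u := Y + t) (by linarith)
  obtain ⟨hc0, hc2⟩ := c_bounds
  set c := Real.eulerMascheroniConstant / 2 + Real.log 2
  set J := ∫ s in Set.Ioi (0:ℝ), FF s (Y + t)
  have he : Real.exp (-2 * (Y + t) ^ 2)
      = Real.exp (-2 * Y ^ 2) * Real.exp (-(4 * Y * t)) * Real.exp (-2 * t ^ 2) := by
    simp only [← Real.exp_add]; congr 1; ring
  rw [he] at hJ
  have hw : Real.exp (-(4 * Y * t)) * Real.exp (Y * t) = Real.exp (-(3 * Y * t)) := by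
    rw [← Real.exp_add]; congr 1; ring
  rw [← hw]
  set D := Real.exp (-2 * Y ^ 2)
  set w := Real.exp (-(4 * Y * t))
  set g := Real.exp (-2 * t ^ 2)
  have hD : 0 < D := Real.exp_pos _
  have hw0 : 0 < w := Real.exp_pos _
  have hg0 : 0 < g := Real.exp_pos _
  have hg1 : g ≤ 1 := Real.exp_le_one_iff.2 (by nlinarith)
  have hg2 : 1 - g ≤ 2 * t ^ 2 := by linarith [Real.add_one_le_exp (-2 * t ^ 2)]
  have hY0 : 0 < Y := by linarith
  have hl0 : 0 ≤ Real.log Y := Real.log_nonneg hY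
  have hl1 : Real.log Y ≤ Y := by linarith [Real.log_le_sub_one_of_pos hY0]
  have hd0 : 0 ≤ Real.log (Y + t) - Real.log Y := by
    linarith [Real.log_le_log hY0 (by linarith : Y ≤ Y + t)]
  have hd1 : Real.log (Y + t) - Real.log Y ≤ t / Y := by
    rw [← Real.log_div (by linarith) (by linarith)]
    have := Real.log_le_sub_one_of_pos (x := (Y + t) / Y) (by positivity)
    have e : (Y + t) / Y - 1 = t / Y := by field_simp; ring
    linarith
  set x := Y * t with hx
  have hx0 : 0 < x := by positivity
  have hE1 : 1 ≤ Real.exp x := Real.one_le_exp hx0.le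
  have hE2 : x ≤ Real.exp x := by linarith [Real.add_one_le_exp x]
  have hE3 : x ^ 2 ≤ 2 * Real.exp x := by linarith [Real.quadratic_le_exp_of_nonneg hx0.le]
  have hB : |g * (Real.log (Y + t) + c) - (Real.log Y + c)| ≤ 13 / Y * Real.exp x := by
    have b1 : |g * (Real.log (Y + t) + c) - (Real.log Y + c)| ≤ t / Y + 2 * t ^ 2 * (3 * Y) := by
      have a1 : 0 ≤ g * (Real.log (Y + t) - Real.log Y) := by positivity
      have a2 : g * (Real.log (Y + t) - Real.log Y) ≤ t / Y := by
        calc _ ≤ 1 * (t / Y) := by gcongr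
          _ = _ := one_mul _
      have a3 : 0 ≤ (1 - g) * (Real.log Y + c) := mul_nonneg (by linarith) (by linarith)
      have a4 : (1 - g) * (Real.log Y + c) ≤ 2 * t ^ 2 * (3 * Y) := by
        apply mul_le_mul hg2 (by linarith) (by linarith) (by positivity)
      have : g * (Real.log (Y + t) + c) - (Real.log Y + c)
        = g * (Real.log (Y + t) - Real.log Y) - (1 - g) * (Real.log Y + c) := by ring
      rw [this, abs_le]
      constructor <;> linarith
    refine b1.trans ?_
    have : t / Y + 2 * t ^ 2 * (3 * Y) = (1 / Y) * (t + 6 * x ^ 2) := by rw [hx]; field_simp; ring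
    rw [this]
    have ht' : t ≤ x := by rw [hx]; nlinarith
    calc (1 / Y) * (t + 6 * x ^ 2) ≤ (1 / Y) * (13 * Real.exp x) := by gcongr; linarith
      _ = _ := by ring
  have hJ2 : |J + D * w * g * (Real.log (Y + t) + c)| ≤ D * w * (4 / Y * Real.exp x) := by
    refine hJ.trans ?_
    have h1 : 1 / (2 * (Y + t)) ≤ 1 / (2 * Y) := by gcongr; linarith
    calc 7 * (D * w * g) * (1 / (2 * (Y + t))) ≤ 7 * (D * w * 1) * (1 / (2 * Y)) := by gcongr
      _ = D * w * (7 / 2 / Y * 1) := by field_simp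
      _ ≤ D * w * (4 / Y * Real.exp x) := by gcongr; norm_num
  have e : J + D * (Real.log Y + c) * w = (J + D * w * g * (Real.log (Y + t) + c))
      - D * w * (g * (Real.log (Y + t) + c) - (Real.log Y + c)) := by ring
  rw [e]
  calc _ ≤ |J + D * w * g * (Real.log (Y + t) + c)|
        + |D * w * (g * (Real.log (Y + t) + c) - (Real.log Y + c))| := abs_sub _ _
    _ ≤ D * w * (4 / Y * Real.exp x) + D * w * (13 / Y * Real.exp x) := by
        rw [abs_mul (D * w), abs_of_pos (by positivity : 0 < D * w)]
        gcongr
    _ = _ := by ring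

lemma final_int {Y : ℝ} (hY : 1 ≤ Y) :
    |(∫ t in Set.Ioi (0 : ℝ), ∫ s in Set.Ioi (0 : ℝ), FF s (Y + t)) +
      Real.exp (-2 * Y ^ 2) * (Real.log Y + (Real.eulerMascheroniConstant / 2 + Real.log 2)) *
        (1 / (4 * Y))|
      ≤ Real.exp (-2 * Y ^ 2) * (17 / Y) * (1 / (3 * Y)) := by
  have hi : IntegrableOn (fun t => ∫ s in Set.Ioi (0 : ℝ), FF s (Y + t)) (Set.Ioi 0) := by
    have h := swap_prod_int hY
    rw [integrable_indicator_iff (measurableSet_Ioi.prod measurableSet_Ioi), IntegrableOn,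
      ← Measure.prod_restrict] at h
    exact h.integral_prod_right
  rw [← exp_int (by linarith : 0 < 4 * Y), ← exp_int (by linarith : 0 < 3 * Y),
    ← integral_const_mul, ← integral_const_mul,
    ← integral_add hi ((exp_intble (by linarith)).const_mul _), ← Real.norm_eq_abs]
  apply norm_integral_le_of_norm_le ((exp_intble (by linarith)).const_mul _)
  filter_upwards [ae_restrict_mem measurableSet_Ioi] with t ht
  exact JJ_point hY ht

/-- Asymptotic expansion of `A₄` as `y → −∞`, with `γ` the Euler–Mascheroni constant. -/
theorem A4_asymptotics :
    ∃ C > (0 : ℝ), ∃ y₀ < (0 : ℝ), ∀ y ≤ y₀,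
      abs (A₄ y -
          (1 / (4 * Real.sqrt (2 * Real.pi))) * (Real.log |y| / |y|) * Real.exp (-2 * y ^ 2) -
          (1 / (4 * Real.sqrt (2 * Real.pi))) * (Real.eulerMascheroniConstant / 2 + Real.log 2) *
            Real.exp (-2 * y ^ 2) / |y|) ≤
        C * Real.exp (-2 * y ^ 2) / y ^ 2 := by
  refine ⟨6, by norm_num, -1, by norm_num, fun y hy => ?_⟩
  have hY : 1 ≤ -y := by linarith
  have hA : A₄ y = -(1 / Real.sqrt (2 * Real.pi)) *
      ∫ t in Set.Ioi (0 : ℝ), ∫ s in Set.Ioi (0 : ℝ), FF s (-y + t) := by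
    rw [← A4_swap hY]
    unfold A₄
    congr 2; ext t₁
    congr 1; ext t₂
    unfold FF
    rw [show -y + t₂ + (t₁ - t₂) = t₁ - y by ring, show -y + t₂ = t₂ - y by ring]
  have hf := final_int hY
  rw [neg_sq] at hf
  have hk : 0 < 1 / Real.sqrt (2 * Real.pi) := by positivity
  have hk1 : 1 / Real.sqrt (2 * Real.pi) ≤ 1 := by
    rw [div_le_one (by positivity), Real.one_le_sqrt]
    linarith [Real.pi_gt_three]
  rw [hA, abs_of_neg (by linarith : y < 0)]
  set I := ∫ t in Set.Ioi (0 : ℝ), ∫ s in Set.Ioi (0 : ℝ), FF s (-y + t)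
  set D := Real.exp (-2 * y ^ 2)
  set c := Real.eulerMascheroniConstant / 2 + Real.log 2
  have hy0 : y ≠ 0 := by linarith
  have hs0 : Real.sqrt (2 * Real.pi) ≠ 0 := by positivity
  have e : -(1 / Real.sqrt (2 * Real.pi)) * I -
        1 / (4 * Real.sqrt (2 * Real.pi)) * (Real.log (-y) / -y) * D -
        1 / (4 * Real.sqrt (2 * Real.pi)) * c * D / -y
      = -((1 / Real.sqrt (2 * Real.pi)) * (I + D * (Real.log (-y) + c) * (1 / (4 * -y)))) := by
    field_simp
    ring
  rw [e, abs_neg, abs_mul, abs_of_pos hk]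
  have hD : 0 < D := Real.exp_pos _
  calc _ ≤ 1 * (D * (17 / -y) * (1 / (3 * -y))) :=
        mul_le_mul hk1 hf (abs_nonneg _) (by norm_num)
    _ = (17 / 3) * D / y ^ 2 := by field_simp
    _ ≤ 6 * D / y ^ 2 := by gcongr; norm_num
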